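/- arXiv:math/0401254 — 3 statements merged into one kernel-verified Lean document; each statement's English description precedes it below -/
import Mathlib

section
/- The quadric q does not divide the polynomial F6 in ℝ[x0,x1,x2,x3]. -/
/-!
Evaluation at a point of `ℂ⁴` is a ring homomorphism, so `q ∣ F6` would force `F6` to vanish at every
complex zero of `q`. With `u i = x i ^ 2`, on `x 3 = 0` and `u 0 + u 1 + u 2 = 0` the polynomial `F6`
reduces to `-13 * u 0 * u 1 * u 2`; the zero `(3, 4, 5i, 0)` of `q` is on this locus and gives the
value `46800`.
-/

set_option maxHeartbeats 2000000

open MvPolynomial Matrix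

noncomputable def qpoly : MvPolynomial (Fin 4) ℝ :=
  X 0^2 + X 1^2 + X 2^2 + X 3^2

noncomputable def F6 : MvPolynomial (Fin 4) ℝ :=
  X 0^6 + X 1^6 + X 2^6 + X 3^6 +
  C (5:ℝ) * (X 0^2 * X 1^2 * (X 0^2 + X 1^2)) +
  C (5:ℝ) * (X 1^2 * X 3^2 * (X 1^2 + X 3^2)) +
  C (5:ℝ) * (X 1^2 * X 2^2 * (X 1^2 + X 2^2)) +
  C (6:ℝ) * (X 0^2 * X 2^2 * (X 0^2 + X 2^2)) +
  C (6:ℝ) * (X 0^2 * X 3^2 * (X 0^2 + X 3^2)) +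
  C (6:ℝ) * (X 2^2 * X 3^2 * (X 2^2 + X 3^2)) +
  C (2:ℝ) * (X 0^2 * X 2^2 * X 3^2)

theorem q_not_dvd_F6 : ¬ (qpoly ∣ F6) := by
  rintro ⟨g, hg⟩
  have h := congrArg (aeval (![3, 4, 5 * Complex.I, 0] : Fin 4 → ℂ)) hg
  have hq : aeval (![3, 4, 5 * Complex.I, 0] : Fin 4 → ℂ) qpoly = 0 := by
    simp [qpoly, mul_pow]
    norm_num
  have hF : aeval (![3, 4, 5 * Complex.I, 0] : Fin 4 → ℂ) F6 = 46800 := by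
    have hI : Complex.I ^ 6 = -1 := by
      rw [show 6 = 2 * 3 from rfl, pow_mul, Complex.I_sq]
      norm_num
    simp [F6, mul_pow, hI]
    norm_num
  rw [map_mul, hq, hF, zero_mul] at h
  norm_num at h
end

section
/- The quadric q does not divide the polynomial F8 in ℝ[x0,x1,x2,x3]. -/
set_option maxHeartbeats 2000000

open MvPolynomial Matrix

noncomputable def F8a : MvPolynomial (Fin 4) ℝ :=
  X 0^8 +
  X 1^8 +
  X 2^8 +
  X 3^8

noncomputable def F8b : MvPolynomial (Fin 4) ℝ :=
  X 0^6 * X 1^2 +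
  X 0^6 * X 2^2 +
  X 0^6 * X 3^2 +
  X 1^6 * X 0^2 +
  X 1^6 * X 2^2 +
  X 1^6 * X 3^2 +
  X 2^6 * X 0^2 +
  X 2^6 * X 1^2 +
  X 2^6 * X 3^2 +
  X 3^6 * X 0^2 +
  X 3^6 * X 1^2 +
  X 3^6 * X 2^2

noncomputable def F8c : MvPolynomial (Fin 4) ℝ :=
  X 0^4 * X 1^4 +
  X 0^4 * X 2^4 +
  X 0^4 * X 3^4 +
  X 1^4 * X 2^4 +
  X 1^4 * X 3^4 +
  X 2^4 * X 3^4

noncomputable def F8d : MvPolynomial (Fin 4) ℝ :=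
  X 0^4 * X 1^2 * X 2^2 +
  X 0^4 * X 1^2 * X 3^2 +
  X 0^4 * X 2^2 * X 3^2 +
  X 1^4 * X 0^2 * X 2^2 +
  X 1^4 * X 0^2 * X 3^2 +
  X 1^4 * X 2^2 * X 3^2 +
  X 2^4 * X 0^2 * X 1^2 +
  X 2^4 * X 0^2 * X 3^2 +
  X 2^4 * X 1^2 * X 3^2 +
  X 3^4 * X 0^2 * X 1^2 +
  X 3^4 * X 0^2 * X 2^2 +
  X 3^4 * X 1^2 * X 2^2

noncomputable def F8e : MvPolynomial (Fin 4) ℝ :=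
  X 0^2 * X 1^2 * X 2^2 * X 3^2

noncomputable def F8 : MvPolynomial (Fin 4) ℝ :=
  C (3:ℝ) * F8a + C (12:ℝ) * F8b + C (30:ℝ) * F8c +
  C (24:ℝ) * F8d + C (144:ℝ) * F8e

theorem q_not_dvd_F8 : ¬ (qpoly ∣ F8) := by
  rintro ⟨g, hg⟩
  -- The complex point `(1, i, 0, 0)` lies on the quadric `q = 0`, but there `F8` takes the value
  -- `3 * 2 + 12 * (-2) + 30 * 1 = 12`.
  have h := congrArg (aeval (![1, Complex.I, 0, 0] : Fin 4 → ℂ)) hg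
  have h6 : Complex.I ^ 6 = -1 := by
    rw [show 6 = 4 + 2 from rfl, pow_add, Complex.I_pow_four, Complex.I_sq, one_mul]
  have h8 : Complex.I ^ 8 = 1 := by
    rw [show 8 = 4 * 2 from rfl, pow_mul, Complex.I_pow_four, one_pow]
  simp [F8, F8a, F8b, F8c, F8d, F8e, qpoly, h6, h8, Complex.I_pow_four] at h
  norm_num at h
end

section
/- The polynomial F6 does not divide the polynomial F12 in ℝ[x0,x1,x2,x3]. -/
/-!
Both polynomials are even in every variable, so they are polynomials in the squares `x_i ^ 2`, and
on the line `x_2 = x_3 = 0` the sextic `F6` has the factor `x_0 ^ 2 + x_1 ^ 2`. Hence `F6` vanishes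
at the complex point `(1, i, 0, 0)`, as would every multiple of it, whereas `F12` takes the value
`48` there.
-/

set_option maxHeartbeats 2000000

open MvPolynomial Matrix

noncomputable def F12a : MvPolynomial (Fin 4) ℝ :=
  X 0^12 +
  X 1^12 +
  X 2^12 +
  X 3^12

noncomputable def F12b : MvPolynomial (Fin 4) ℝ :=
  X 0^10 * X 1^2 +
  X 0^10 * X 2^2 +
  X 0^10 * X 3^2 +
  X 1^10 * X 0^2 +
  X 1^10 * X 2^2 +
  X 1^10 * X 3^2 +
  X 2^10 * X 0^2 +
  X 2^10 * X 1^2 +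
  X 2^10 * X 3^2 +
  X 3^10 * X 0^2 +
  X 3^10 * X 1^2 +
  X 3^10 * X 2^2

noncomputable def F12c : MvPolynomial (Fin 4) ℝ :=
  X 0^8 * X 1^4 +
  X 0^8 * X 2^4 +
  X 0^8 * X 3^4 +
  X 1^8 * X 0^4 +
  X 1^8 * X 2^4 +
  X 1^8 * X 3^4 +
  X 2^8 * X 0^4 +
  X 2^8 * X 1^4 +
  X 2^8 * X 3^4 +
  X 3^8 * X 0^4 +
  X 3^8 * X 1^4 +
  X 3^8 * X 2^4

noncomputable def F12d : MvPolynomial (Fin 4) ℝ :=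
  X 0^6 * X 1^6 +
  X 0^6 * X 2^6 +
  X 0^6 * X 3^6 +
  X 1^6 * X 2^6 +
  X 1^6 * X 3^6 +
  X 2^6 * X 3^6

noncomputable def F12e : MvPolynomial (Fin 4) ℝ :=
  X 0^8 * X 1^2 * X 2^2 +
  X 0^8 * X 1^2 * X 3^2 +
  X 0^8 * X 2^2 * X 3^2 +
  X 1^8 * X 0^2 * X 2^2 +
  X 1^8 * X 0^2 * X 3^2 +
  X 1^8 * X 2^2 * X 3^2 +
  X 2^8 * X 0^2 * X 1^2 +
  X 2^8 * X 0^2 * X 3^2 +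
  X 2^8 * X 1^2 * X 3^2 +
  X 3^8 * X 0^2 * X 1^2 +
  X 3^8 * X 0^2 * X 2^2 +
  X 3^8 * X 1^2 * X 2^2

noncomputable def F12f : MvPolynomial (Fin 4) ℝ :=
  X 0^6 * X 1^4 * X 2^2 +
  X 0^6 * X 1^4 * X 3^2 +
  X 0^6 * X 2^4 * X 1^2 +
  X 0^6 * X 2^4 * X 3^2 +
  X 0^6 * X 3^4 * X 1^2 +
  X 0^6 * X 3^4 * X 2^2 +
  X 1^6 * X 0^4 * X 2^2 +
  X 1^6 * X 0^4 * X 3^2 +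
  X 1^6 * X 2^4 * X 0^2 +
  X 1^6 * X 2^4 * X 3^2 +
  X 1^6 * X 3^4 * X 0^2 +
  X 1^6 * X 3^4 * X 2^2 +
  X 2^6 * X 0^4 * X 1^2 +
  X 2^6 * X 0^4 * X 3^2 +
  X 2^6 * X 1^4 * X 0^2 +
  X 2^6 * X 1^4 * X 3^2 +
  X 2^6 * X 3^4 * X 0^2 +
  X 2^6 * X 3^4 * X 1^2 +
  X 3^6 * X 0^4 * X 1^2 +
  X 3^6 * X 0^4 * X 2^2 +
  X 3^6 * X 1^4 * X 0^2 +
  X 3^6 * X 1^4 * X 2^2 +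
  X 3^6 * X 2^4 * X 0^2 +
  X 3^6 * X 2^4 * X 1^2

noncomputable def F12g : MvPolynomial (Fin 4) ℝ :=
  X 0^4 * X 1^4 * X 2^4 +
  X 0^4 * X 1^4 * X 3^4 +
  X 0^4 * X 2^4 * X 3^4 +
  X 1^4 * X 2^4 * X 3^4

noncomputable def F12h : MvPolynomial (Fin 4) ℝ :=
  X 0^6 * X 1^2 * X 2^2 * X 3^2 +
  X 1^6 * X 0^2 * X 2^2 * X 3^2 +
  X 2^6 * X 0^2 * X 1^2 * X 3^2 +
  X 3^6 * X 0^2 * X 1^2 * X 2^2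

noncomputable def F12i : MvPolynomial (Fin 4) ℝ :=
  X 0^4 * X 1^4 * X 2^2 * X 3^2 +
  X 0^4 * X 2^4 * X 1^2 * X 3^2 +
  X 0^4 * X 3^4 * X 1^2 * X 2^2 +
  X 1^4 * X 2^4 * X 0^2 * X 3^2 +
  X 1^4 * X 3^4 * X 0^2 * X 2^2 +
  X 2^4 * X 3^4 * X 0^2 * X 1^2

noncomputable def F12 : MvPolynomial (Fin 4) ℝ :=
  C (123/8:ℝ) * F12a + C (231/4:ℝ) * F12b + C (21/8:ℝ) * F12c -
  C (255/2:ℝ) * F12d + C (949/2:ℝ) * F12e + C (1839/2:ℝ) * F12f +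
  C (6111/4:ℝ) * F12g + C (1809:ℝ) * F12h + C (7281/2:ℝ) * F12i

theorem F6_not_dvd_F12 : ¬ (F6 ∣ F12) := by
  rintro ⟨q, hq⟩
  have h2 : Complex.I ^ 2 = -1 := Complex.I_sq
  have h4 : Complex.I ^ 4 = 1 := Complex.I_pow_four
  have h6 : Complex.I ^ 6 = -1 := by linear_combination Complex.I ^ 4 * h2 - h4
  have h8 : Complex.I ^ 8 = 1 := by linear_combination (Complex.I ^ 4 + 1) * h4
  have h10 : Complex.I ^ 10 = -1 := by linear_combination Complex.I ^ 8 * h2 - h8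
  have h12 : Complex.I ^ 12 = 1 := by linear_combination Complex.I ^ 8 * h4 + h8
  have hF6 : aeval (![1, Complex.I, 0, 0] : Fin 4 → ℂ) F6 = 0 := by
    simp [F6, h2, h6]
  have hF12 : aeval (![1, Complex.I, 0, 0] : Fin 4 → ℂ) F12 = 48 := by
    simp [F12, F12a, F12b, F12c, F12d, F12e, F12f, F12g, F12h, F12i, h2, h4, h6, h8, h10, h12]
    norm_num
  rw [hq, map_mul, hF6, zero_mul] at hF12
  norm_num at hF12
end
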